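/- Fix an integer d ≥ 1, p ∈ (1,∞), a penalty function φ, and let (μ_t)_{t≥0} be a convolution semigroup in 𝒫_p(ℝ^d). Then for every f ∈ C₀(ℝ^d), t ≥ 0, n ∈ ℕ, and x ∈ ℝ^d: ∫_{ℝ^d} f(x+y) μ_t(dy) ≤ 𝒮^n(t)f(x) ≤ S(t)f(x). -/

import Mathlib

open MeasureTheory Filter Topology ENNReal NNReal Set ZeroAtInfty
noncomputable section

/-- Euclidean space ℝ^d. -/
abbrev Ed (d : ℕ) := EuclideanSpace ℝ (Fin d)

/-- `𝒫_p(ℝ^d)`: Borel probability measures with finite `p`-th moment. -/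
def MemPp {d : ℕ} (p : ℝ) (μ : Measure (Ed d)) : Prop :=
  IsProbabilityMeasure μ ∧ ∫⁻ x, (‖x‖₊ : ℝ≥0∞) ^ p ∂μ < ∞

/-- `γ` is a coupling of `μ` and `ν`. -/
def IsCoupling {d : ℕ} (γ : Measure (Ed d × Ed d)) (μ ν : Measure (Ed d)) : Prop :=
  γ.map Prod.fst = μ ∧ γ.map Prod.snd = ν

/-- The `p`-Wasserstein distance `𝒲_p(μ, ν)`. -/
def Wp {d : ℕ} (p : ℝ) (μ ν : Measure (Ed d)) : ℝ :=
  (⨅ γ ∈ {γ : Measure (Ed d × Ed d) | IsCoupling γ μ ν},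
    (∫⁻ q, (‖q.2 - q.1‖₊ : ℝ≥0∞) ^ p ∂γ) ^ (1 / p)).toReal

/-- The scaled penalty `φ_t(r) = t·φ(r/t)` for `t > 0`; `φ_0(0) = 0`, `φ_0(r) = ∞` for `r > 0`. -/
def phit (φ : ℝ≥0 → ℝ≥0∞) (t : ℝ) (r : ℝ≥0) : ℝ≥0∞ :=
  if 0 < t then (t.toNNReal : ℝ≥0∞) * φ (r / t.toNNReal) else (if r = 0 then 0 else ∞)

/-- `φ` is a penalty function: lower semicontinuous, convex, increasing, not constant,
`φ(0) = 0`, and `x ↦ φ(x^{1/p})` is convex. -/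
structure IsPenalty (p : ℝ) (φ : ℝ≥0 → ℝ≥0∞) : Prop where
  lsc : LowerSemicontinuous φ
  convex : ∀ a b l m : ℝ≥0, l + m = 1 →
    φ (l * a + m * b) ≤ (l : ℝ≥0∞) * φ a + (m : ℝ≥0∞) * φ b
  mono : Monotone φ
  not_const : ∃ a b, φ a ≠ φ b
  map_zero : φ 0 = 0
  convex_rpow : ∀ a b l m : ℝ≥0, l + m = 1 →
    φ ((l * a + m * b) ^ (1 / p)) ≤ (l : ℝ≥0∞) * φ (a ^ (1 / p)) + (m : ℝ≥0∞) * φ (b ^ (1 / p))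

/-- The convex conjugate `φ*(y) = sup_{x ≥ 0} (xy − φ(x))`. -/
def phiStar (φ : ℝ≥0 → ℝ≥0∞) (y : ℝ≥0) : ℝ≥0∞ :=
  ⨆ x : ℝ≥0, ((x * y : ℝ≥0) : ℝ≥0∞) - φ x

/-- The one-step operator `S(t)f(x) = sup_ν ( ∫ f(x+y) ν(dy) − φ_t(𝒲_p(μ_t, ν)) )`. -/
def Sop {d : ℕ} (p : ℝ) (φ : ℝ≥0 → ℝ≥0∞) (μt : Measure (Ed d)) (t : ℝ)
    (f : Ed d → ℝ) (x : Ed d) : ℝ :=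
  sSup { r : ℝ | ∃ ν : Measure (Ed d), MemPp p ν ∧ ∃ c : ℝ, 0 ≤ c ∧
    phit φ t (Wp p μt ν).toNNReal ≤ ENNReal.ofReal c ∧ r = (∫ y, f (x + y) ∂ν) - c }

/-- The iterated operator `𝒮ⁿ(t) = S(2⁻ⁿ)^{∘ k} ∘ S(t − k·2⁻ⁿ)`, `k = ⌊2ⁿ t⌋`. -/
def SiterN {d : ℕ} (p : ℝ) (φ : ℝ≥0 → ℝ≥0∞) (μ : ℝ → Measure (Ed d)) (n : ℕ) (t : ℝ)
    (f : Ed d → ℝ) : Ed d → ℝ :=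
  (fun g => Sop p φ (μ ((2 : ℝ) ^ n)⁻¹) ((2 : ℝ) ^ n)⁻¹ g)^[⌊(2:ℝ)^n * t⌋₊]
    (Sop p φ (μ (t - ⌊(2:ℝ)^n * t⌋₊ * ((2:ℝ)^n)⁻¹)) (t - ⌊(2:ℝ)^n * t⌋₊ * ((2:ℝ)^n)⁻¹) f)

/-- The limiting operator `𝒮(t)f = lim_n 𝒮ⁿ(t)f` (a decreasing limit, i.e. an infimum). -/
def Slim {d : ℕ} (p : ℝ) (φ : ℝ≥0 → ℝ≥0∞) (μ : ℝ → Measure (Ed d)) (t : ℝ)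
    (f : Ed d → ℝ) (x : Ed d) : ℝ :=
  ⨅ n : ℕ, SiterN p φ μ n t f x

/-- `f ∈ C₀(ℝ^d)`: continuous and vanishing at infinity. -/
def IsC0 {d : ℕ} (f : Ed d → ℝ) : Prop :=
  Continuous f ∧ Tendsto f (cocompact (Ed d)) (𝓝 0)

/-- `(μ_t)_{t ≥ 0}` is a convolution semigroup in `𝒫_p(ℝ^d)`. -/
def IsConvSemigroup {d : ℕ} (p : ℝ) (μ : ℝ → Measure (Ed d)) : Prop :=
  μ 0 = Measure.dirac 0 ∧ (∀ s t : ℝ, 0 ≤ s → 0 ≤ t → μ (s + t) = (μ s).conv (μ t)) ∧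
    ∀ t : ℝ, 0 ≤ t → MemPp p (μ t)

/-- `𝒲_p(μ_t, δ_0) → 0` as `t ↓ 0`. -/
def WContinuousAtZero {d : ℕ} (p : ℝ) (μ : ℝ → Measure (Ed d)) : Prop :=
  Tendsto (fun t => Wp p (μ t) (Measure.dirac 0)) (𝓝[>] (0:ℝ)) (𝓝 0)

/-- The semigroup of the underlying Lévy process, `S^μ(t)f(x) = ∫ f(x+y) μ_t(dy)`. -/
def Smu {d : ℕ} (μ : ℝ → Measure (Ed d)) (t : ℝ) (f : Ed d → ℝ) (x : Ed d) : ℝ :=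
  ∫ y, f (x + y) ∂(μ t)

/-- `f ∈ D(A^μ)` with `A^μ f = Af`: `(S^μ(t)f − f)/t → Af` uniformly as `t ↓ 0`. -/
def HasGenerator {d : ℕ} (μ : ℝ → Measure (Ed d)) (f Af : Ed d → ℝ) : Prop :=
  TendstoUniformly (fun t x => (Smu μ t f x - f x) / t) Af (𝓝[>] (0:ℝ))

/-- `f ∈ C₀¹(ℝ^d)`: continuously differentiable, vanishing at infinity, with gradient
vanishing at infinity. -/
def IsC01 {d : ℕ} (f : Ed d → ℝ) : Prop :=
  IsC0 f ∧ ContDiff ℝ 1 f ∧ Tendsto (fun x => gradient f x) (cocompact (Ed d)) (𝓝 0)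



/-! ### Penalty lemmas -/

lemma pen_bound {p : ℝ} {φ : ℝ≥0 → ℝ≥0∞} (hφ : IsPenalty p φ) (C : ℝ) (t : ℝ) :
    ∃ R : ℝ≥0, ∀ w : ℝ≥0, phit φ t w ≤ ENNReal.ofReal C → w ≤ R := by
  by_cases ht : 0 < t
  · obtain ⟨a, ha⟩ : ∃ a, φ a ≠ 0 := by
      by_contra! h
      obtain ⟨a, b, hab⟩ := hφ.not_const
      exact hab (by rw [h a, h b])
    set T := t.toNNReal with hT
    have hTpos : 0 < T := Real.toNNReal_pos.2 ht
    obtain ⟨e, he0, he⟩ : ∃ e : ℝ≥0, 0 < e ∧ (e : ℝ≥0∞) ≤ φ a := by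
      obtain ⟨e, he1, he2⟩ := ENNReal.lt_iff_exists_nnreal_btwn.1 (pos_iff_ne_zero.2 ha)
      exact ⟨e, by exact_mod_cast he1, he2.le⟩
    refine ⟨a * T + a * C.toNNReal / e, fun w hw => ?_⟩
    by_cases hwa : w / T ≤ a
    · exact ((div_le_iff₀ hTpos).1 hwa).trans le_self_add
    · push Not at hwa
      have hwT : 0 < w / T := lt_of_le_of_lt zero_le hwa
      have h1 := hφ.convex (w / T) 0 (a / (w / T)) (1 - a / (w / T))
        (add_tsub_cancel_of_le (by rw [div_le_one hwT]; exact hwa.le))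
      rw [hφ.map_zero, mul_zero, mul_zero, add_zero, add_zero, div_mul_cancel₀ _ hwT.ne'] at h1
      simp only [phit, ht, if_true, ← hT] at hw
      have h2 : φ (w / T) ≤ ((C.toNNReal / T : ℝ≥0) : ℝ≥0∞) := by
        rw [ENNReal.coe_div hTpos.ne', ENNReal.le_div_iff_mul_le (by left; simp [hTpos.ne'])
          (by left; simp), mul_comm]
        exact hw
      have h3 : (e : ℝ≥0∞) ≤ ((a / (w / T) * (C.toNNReal / T) : ℝ≥0) : ℝ≥0∞) := by
        rw [ENNReal.coe_mul]
        exact he.trans (h1.trans (by gcongr))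
      have h4 : e ≤ a / (w / T) * (C.toNNReal / T) := by exact_mod_cast h3
      have hw0 : 0 < w := by
        by_contra h
        have : w = 0 := by simpa using h
        simp [this] at hwT
      have h5 : a / (w / T) * (C.toNNReal / T) = a * C.toNNReal / w := by
        field_simp
      rw [h5, le_div_iff₀ hw0] at h4
      refine le_trans ?_ le_add_self
      rw [le_div_iff₀ he0, mul_comm]; exact h4
  · refine ⟨0, fun w hw => ?_⟩
    by_contra h
    have : w ≠ 0 := fun h' => h h'.le
    simp [phit, ht, this] at hw

lemma phit_zero {p : ℝ} {φ : ℝ≥0 → ℝ≥0∞} (hφ : IsPenalty p φ) (t : ℝ) : phit φ t 0 = 0 := by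
  simp [phit, hφ.map_zero]

lemma phit_mono {p : ℝ} {φ : ℝ≥0 → ℝ≥0∞} (hφ : IsPenalty p φ) (t : ℝ) : Monotone (phit φ t) := by
  intro a b hab
  by_cases ht : 0 < t
  · simp only [phit, ht, if_true]
    gcongr
    apply hφ.mono
    gcongr
  · simp only [phit, ht, if_false]
    by_cases hb : b = 0
    · have : a = 0 := by simpa [hb] using hab
      simp [this]
    · simp [hb]

lemma phit_add {p : ℝ} {φ : ℝ≥0 → ℝ≥0∞} (hφ : IsPenalty p φ) {s t : ℝ} (hs : 0 ≤ s) (ht : 0 ≤ t)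
    (a b : ℝ≥0) : phit φ (s + t) (a + b) ≤ phit φ s a + phit φ t b := by
  rcases hs.eq_or_lt with rfl | hs
  · by_cases ha : a = 0
    · simp [ha]
    · simp [phit, ha]
  rcases ht.eq_or_lt with rfl | ht
  · by_cases hb : b = 0
    · simp [hb]
    · simp [phit, hb]
  have hst : 0 < s + t := by positivity
  simp only [phit, hs, ht, hst, if_true, Real.toNNReal_add hs.le ht.le]
  have hs' : 0 < s.toNNReal := Real.toNNReal_pos.2 hs
  have ht' : 0 < t.toNNReal := Real.toNNReal_pos.2 ht
  generalize s.toNNReal = S at *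
  generalize t.toNNReal = T at *
  have h1 := hφ.convex (a / S) (b / T) (S / (S + T)) (T / (S + T)) (by field_simp)
  have h2 : S / (S + T) * (a / S) + T / (S + T) * (b / T) = (a + b) / (S + T) := by field_simp
  rw [h2] at h1
  calc ((S + T : ℝ≥0) : ℝ≥0∞) * φ ((a + b) / (S + T))
      ≤ ((S + T : ℝ≥0) : ℝ≥0∞) * (((S / (S + T) : ℝ≥0) : ℝ≥0∞) * φ (a / S)
        + ((T / (S + T) : ℝ≥0) : ℝ≥0∞) * φ (b / T)) := by gcongr
    _ = _ := by
      rw [mul_add, ← mul_assoc, ← mul_assoc, ← ENNReal.coe_mul, ← ENNReal.coe_mul]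
      congr <;> field_simp

def epi (p : ℝ) (φ : ℝ≥0 → ℝ≥0∞) (t : ℝ) : Set (ℝ × ℝ) :=
  {q | 0 ≤ q.1 ∧ 0 ≤ q.2 ∧ phit φ t (q.1.toNNReal ^ (1 / p)) ≤ ENNReal.ofReal q.2}

lemma phit_lsc {p : ℝ} {φ : ℝ≥0 → ℝ≥0∞} (hφ : IsPenalty p φ) (t : ℝ) :
    LowerSemicontinuous (phit φ t) := by
  by_cases ht : 0 < t
  · have hT : 0 < t.toNNReal := Real.toNNReal_pos.2 ht
    have : phit φ t = fun r => (t.toNNReal : ℝ≥0∞) * φ (r / t.toNNReal) := by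
      ext r; simp [phit, ht]
    rw [this]
    have h1 : LowerSemicontinuous (fun r : ℝ≥0 => φ (r / t.toNNReal)) :=
      hφ.lsc.comp (by fun_prop)
    exact (ENNReal.continuous_const_mul ENNReal.coe_ne_top).comp_lowerSemicontinuous h1
      (fun a b h => by dsimp only; gcongr)
  · have : phit φ t = fun r => if r = 0 then 0 else ∞ := by
      ext r; simp [phit, ht]
    rw [this, lowerSemicontinuous_iff_isClosed_preimage]
    intro y
    by_cases hy : y = ∞
    · have : (fun r : ℝ≥0 => if r = 0 then (0:ℝ≥0∞) else ∞) ⁻¹' Iic y = univ := by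
        ext; simp [hy]
      rw [this]; exact isClosed_univ
    · have : (fun r : ℝ≥0 => if r = 0 then (0:ℝ≥0∞) else ∞) ⁻¹' Iic y = {0} := by
        ext r
        by_cases hr : r = 0 <;> simp [hr, hy]
      rw [this]; exact isClosed_singleton

lemma epi_closed {p : ℝ} (hp : 1 < p) {φ : ℝ≥0 → ℝ≥0∞} (hφ : IsPenalty p φ) (t : ℝ) :
    IsClosed (epi p φ t) := by
  have h1 : IsClosed {q : ℝ × ℝ | 0 ≤ q.1} := isClosed_le (by fun_prop) (by fun_prop)
  have h2 : IsClosed {q : ℝ × ℝ | 0 ≤ q.2} := isClosed_le (by fun_prop) (by fun_prop)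
  have h3 := (phit_lsc hφ t).isClosed_epigraph
  have hp' : 0 ≤ 1 / p := by positivity
  have hc : Continuous (fun q : ℝ × ℝ => (q.1.toNNReal ^ (1 / p), ENNReal.ofReal q.2)) := by
    refine Continuous.prodMk ?_ ?_
    · exact (NNReal.continuous_rpow_const hp').comp (continuous_real_toNNReal.comp continuous_fst)
    · exact ENNReal.continuous_ofReal.comp continuous_snd
  exact h1.inter (h2.inter (h3.preimage hc))

lemma epi_convex {p : ℝ} (hp : 1 < p) {φ : ℝ≥0 → ℝ≥0∞} (hφ : IsPenalty p φ) (t : ℝ) :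
    Convex ℝ (epi p φ t) := by
  have hp0 : p ≠ 0 := by positivity
  have key : ∀ a b l m : ℝ≥0, l + m = 1 → phit φ t ((l * a + m * b) ^ (1 / p)) ≤
      (l : ℝ≥0∞) * phit φ t (a ^ (1 / p)) + (m : ℝ≥0∞) * phit φ t (b ^ (1 / p)) := by
    intro a b l m hlm
    by_cases ht : 0 < t
    · simp only [phit, ht, if_true]
      have hT : 0 < t.toNNReal := Real.toNNReal_pos.2 ht
      generalize t.toNNReal = T at *
      have hd : ∀ x : ℝ≥0, x ^ (1 / p) / T = (x / T ^ p) ^ (1 / p) := by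
        intro x
        rw [NNReal.div_rpow, ← NNReal.rpow_mul, mul_one_div_cancel hp0, NNReal.rpow_one]
      rw [hd, hd, hd]
      have h1 := hφ.convex_rpow (a / T ^ p) (b / T ^ p) l m hlm
      rw [show l * (a / T ^ p) + m * (b / T ^ p) = (l * a + m * b) / T ^ p by ring] at h1
      refine (mul_le_mul_right h1 (T : ℝ≥0∞)).trans (le_of_eq ?_)
      rw [mul_add, mul_left_comm, mul_left_comm (T : ℝ≥0∞) (m : ℝ≥0∞)]
    · simp only [phit, ht, if_false]
      simp only [NNReal.rpow_eq_zero_iff]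
      by_cases ha : l * a = 0
      · by_cases hb : m * b = 0
        · rw [ha, hb]; simp [hp0]
        · have : m ≠ 0 ∧ b ≠ 0 := by simpa using hb
          simp [this]
      · have : l ≠ 0 ∧ a ≠ 0 := by simpa using ha
        simp [this]
  rintro ⟨x, c⟩ ⟨hx, hc, h1⟩ ⟨y, e⟩ ⟨hy, he, h2⟩ l m hl hm hlm
  dsimp only at hx hc h1 hy he h2
  refine ⟨?_, ?_, ?_⟩
  · simp; positivity
  · simp; positivity
  · simp only [Prod.smul_mk, Prod.mk_add_mk, smul_eq_mul]
    rw [Real.toNNReal_add (by positivity) (by positivity), Real.toNNReal_mul hl,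
      Real.toNNReal_mul hm, ENNReal.ofReal_add (by positivity) (by positivity),
      ENNReal.ofReal_mul hl, ENNReal.ofReal_mul hm]
    refine (key _ _ _ _ ?_).trans ?_
    · rw [← Real.toNNReal_add hl hm, hlm, Real.toNNReal_one]
    · exact add_le_add (mul_le_mul_right h1 _) (mul_le_mul_right h2 _)

lemma phit_jensen {d : ℕ} {p : ℝ} (hp : 1 < p) {φ : ℝ≥0 → ℝ≥0∞} (hφ : IsPenalty p φ) (t : ℝ)
    (ν : Measure (Ed d)) [IsProbabilityMeasure ν] (w : Ed d → ℝ≥0) (hw : Measurable w)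
    (c : Ed d → ℝ) (hcm : Measurable c) (hc0 : ∀ y, 0 ≤ c y) (C : ℝ) (hC : ∀ y, c y ≤ C)
    (hwc : ∀ y, phit φ t (w y) ≤ ENNReal.ofReal (c y)) :
    ∃ B : ℝ≥0, (∫⁻ y, (w y : ℝ≥0∞) ^ p ∂ν) ^ (1 / p) = B ∧
      phit φ t B ≤ ENNReal.ofReal (∫ y, c y ∂ν) := by
  have hp0 : 0 < p := by positivity
  obtain ⟨R, hR⟩ := pen_bound hφ C t
  have hwR : ∀ y, w y ≤ R := fun y => hR _ ((hwc y).trans (ENNReal.ofReal_le_ofReal (hC y)))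
  have hci : Integrable c ν := by
    refine Integrable.of_bound hcm.aestronglyMeasurable C (ae_of_all _ fun y => ?_)
    rw [Real.norm_of_nonneg (hc0 y)]; exact hC y
  have hwm : Measurable (fun y => ((w y ^ p : ℝ≥0) : ℝ)) := by fun_prop
  have hwi : Integrable (fun y => ((w y ^ p : ℝ≥0) : ℝ)) ν := by
    refine Integrable.of_bound hwm.aestronglyMeasurable ((R ^ p : ℝ≥0) : ℝ)
      (ae_of_all _ fun y => ?_)
    rw [Real.norm_of_nonneg (by positivity)]
    exact_mod_cast NNReal.rpow_le_rpow (hwR y) hp0.le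
  have hmem := (epi_convex hp hφ t).integral_mem (μ := ν) (epi_closed hp hφ t)
    (f := fun y => (((w y ^ p : ℝ≥0) : ℝ), c y)) (ae_of_all _ fun y => by
      refine ⟨by positivity, hc0 y, ?_⟩
      simp only [Real.toNNReal_coe]
      rw [← NNReal.rpow_mul, mul_one_div_cancel hp0.ne', NNReal.rpow_one]
      exact hwc y) (hwi.prodMk hci)
  rw [integral_pair hwi hci] at hmem
  refine ⟨_, ?_, hmem.2.2⟩
  dsimp only
  rw [ENNReal.coe_rpow_of_nonneg _ (by positivity)]
  congr 1
  rw [← ENNReal.ofReal, ofReal_integral_eq_lintegral_ofReal hwi (ae_of_all _ fun y => by positivity)]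
  refine lintegral_congr fun y => ?_
  rw [ENNReal.ofReal_coe_nnreal, ENNReal.coe_rpow_of_nonneg _ hp0.le]

/-! ### Wasserstein lemmas -/

def We {d : ℕ} (p : ℝ) (μ ν : Measure (Ed d)) : ℝ≥0∞ :=
  ⨅ γ ∈ {γ : Measure (Ed d × Ed d) | IsCoupling γ μ ν},
    (∫⁻ q, (‖q.2 - q.1‖₊ : ℝ≥0∞) ^ p ∂γ) ^ (1 / p)

lemma We_le {d : ℕ} {p : ℝ} {μ ν : Measure (Ed d)} {γ : Measure (Ed d × Ed d)}
    (h : IsCoupling γ μ ν) :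
    We p μ ν ≤ (∫⁻ q, (‖q.2 - q.1‖₊ : ℝ≥0∞) ^ p ∂γ) ^ (1 / p) :=
  iInf₂_le γ h

lemma exists_coupling {d : ℕ} {p : ℝ} {μ ν : Measure (Ed d)} (h : We p μ ν ≠ ∞) {e : ℝ≥0∞}
    (he : e ≠ 0) : ∃ γ, IsCoupling γ μ ν ∧
      (∫⁻ q, (‖q.2 - q.1‖₊ : ℝ≥0∞) ^ p ∂γ) ^ (1 / p) ≤ We p μ ν + e := by
  have h1 : We p μ ν < We p μ ν + e := ENNReal.lt_add_right h he
  conv at h1 => lhs; unfold We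
  rw [iInf_lt_iff] at h1
  obtain ⟨γ, h1⟩ := h1
  rw [iInf_lt_iff] at h1
  obtain ⟨h2, h1⟩ := h1
  exact ⟨γ, h2, h1.le⟩

lemma IsCoupling.isProb {d : ℕ} {μ ν : Measure (Ed d)} [IsProbabilityMeasure μ]
    {γ : Measure (Ed d × Ed d)} (h : IsCoupling γ μ ν) : IsProbabilityMeasure γ := by
  constructor
  have : γ.map Prod.fst univ = 1 := by rw [h.1]; simp
  rwa [Measure.map_apply measurable_fst MeasurableSet.univ, preimage_univ] at this

lemma We_self {d : ℕ} {p : ℝ} (hp : 1 < p) (μ : Measure (Ed d)) : We p μ μ = 0 := by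
  have hp0 : 0 < p := by positivity
  have hm : Measurable (fun x : Ed d => (x, x)) := by fun_prop
  have hc : IsCoupling (μ.map fun x : Ed d => (x, x)) μ μ := by
    constructor
    · rw [Measure.map_map measurable_fst hm]; exact Measure.map_id
    · rw [Measure.map_map measurable_snd hm]; exact Measure.map_id
  refine le_antisymm ((We_le hc).trans ?_) bot_le
  rw [lintegral_map (by fun_prop) hm]
  simp [hp0]

lemma We_lt_top {d : ℕ} {p : ℝ} (hp : 1 < p) {μ ν : Measure (Ed d)} (hμ : MemPp p μ)
    (hν : MemPp p ν) : We p μ ν < ∞ := by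
  have hp0 : 0 < p := by positivity
  have := hμ.1
  have := hν.1
  have hc : IsCoupling (μ.prod ν) μ ν := by
    constructor
    · rw [← Measure.fst, Measure.fst_prod]
    · rw [← Measure.snd, Measure.snd_prod]
  refine (We_le hc).trans_lt ?_
  refine lt_of_le_of_lt (b := (∫⁻ q : Ed d × Ed d, ((fun q : Ed d × Ed d => (‖q.2‖₊ : ℝ≥0∞)) +
    (fun q : Ed d × Ed d => (‖q.1‖₊ : ℝ≥0∞))) q ^ p ∂(μ.prod ν)) ^ (1 / p)) ?_ ?_
  · gcongr with q
    rw [Pi.add_apply]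
    exact_mod_cast nnnorm_sub_le _ _
  · refine (ENNReal.lintegral_Lp_add_le (by fun_prop) (by fun_prop) hp.le).trans_lt ?_
    rw [lintegral_prod _ (by fun_prop), lintegral_prod _ (by fun_prop)]
    simp only [lintegral_const, measure_univ, mul_one]
    refine ENNReal.add_lt_top.2 ⟨?_, ?_⟩
    · exact ENNReal.rpow_lt_top_of_nonneg (by positivity) hν.2.ne
    · exact ENNReal.rpow_lt_top_of_nonneg (by positivity) hμ.2.ne

lemma memPp_of_We {d : ℕ} {p : ℝ} (hp : 1 < p) {μ ν : Measure (Ed d)} (hμ : MemPp p μ)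
    (hν : IsProbabilityMeasure ν) (h : We p μ ν ≠ ∞) : MemPp p ν := by
  have hp0 : 0 < p := by positivity
  refine ⟨hν, ?_⟩
  obtain ⟨γ, hγ, hle⟩ := exists_coupling h one_ne_zero
  have h1 : (∫⁻ x, (‖x‖₊ : ℝ≥0∞) ^ p ∂ν) ^ (1 / p) < ∞ := by
    rw [← hγ.2, lintegral_map (by fun_prop) measurable_snd]
    refine lt_of_le_of_lt (b := (∫⁻ q : Ed d × Ed d, ((fun q : Ed d × Ed d => (‖q.2 - q.1‖₊ : ℝ≥0∞)) +
      (fun q : Ed d × Ed d => (‖q.1‖₊ : ℝ≥0∞))) q ^ p ∂γ) ^ (1 / p)) ?_ ?_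
    · gcongr with q
      rw [Pi.add_apply]
      have := nnnorm_add_le (q.2 - q.1) q.1
      rw [sub_add_cancel] at this
      exact_mod_cast this
    · refine (ENNReal.lintegral_Lp_add_le (by fun_prop) (by fun_prop) hp.le).trans_lt ?_
      refine ENNReal.add_lt_top.2 ⟨hle.trans_lt ?_, ?_⟩
      · exact ENNReal.add_lt_top.2 ⟨h.lt_top, ENNReal.one_lt_top⟩
      · refine ENNReal.rpow_lt_top_of_nonneg (by positivity) ?_
        have h2 := hμ.2
        rw [← hγ.1, lintegral_map (by fun_prop) measurable_fst] at h2
        exact h2.ne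
  by_contra h3
  rw [not_lt, top_le_iff] at h3
  rw [h3, ENNReal.top_rpow_of_pos (by positivity)] at h1
  exact lt_irrefl _ h1

open ProbabilityTheory in
/-- countable-valued kernel -/
def cker {α : Type*} [MeasurableSpace α] {β : Type*} [MeasurableSpace β] (m : ℕ → Measure β)
    (ι : α → ℕ) (hι : Measurable ι) : Kernel α β :=
  (Kernel.ofFunOfCountable m).comap ι hι

open ProbabilityTheory in
lemma cker_apply {α : Type*} [MeasurableSpace α] {β : Type*} [MeasurableSpace β] (m : ℕ → Measure β)
    (ι : α → ℕ) (hι : Measurable ι) (a : α) : cker m ι hι a = m (ι a) := rfl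

open ProbabilityTheory in
instance cker_markov {α : Type*} [MeasurableSpace α] {β : Type*} [MeasurableSpace β]
    (m : ℕ → Measure β) [hm : ∀ i, IsProbabilityMeasure (m i)]
    (ι : α → ℕ) (hι : Measurable ι) : IsMarkovKernel (cker m ι hι) :=
  ⟨fun a => hm (ι a)⟩

open ProbabilityTheory in
/-- law of `Y + Z`, `Y ∼ ν`, `Z | Y ∼ m (ι Y)` -/
def glue {d : ℕ} (ν : Measure (Ed d)) (m : ℕ → Measure (Ed d)) (ι : Ed d → ℕ)
    (hι : Measurable ι) : Measure (Ed d) :=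
  (ν ⊗ₘ cker m ι hι).map (fun q => q.1 + q.2)

lemma We_glue {d : ℕ} {p : ℝ} (hp : 1 < p) {μ₁ μ₂ ν : Measure (Ed d)} (hμ₁ : MemPp p μ₁)
    (hμ₂ : MemPp p μ₂) (hν : MemPp p ν) (m : ℕ → Measure (Ed d)) (hm : ∀ i, MemPp p (m i))
    (ι : Ed d → ℕ) (hι : Measurable ι) :
    We p (μ₁.conv μ₂) (glue ν m ι hι) ≤
      We p μ₁ ν + (∫⁻ y, We p μ₂ (m (ι y)) ^ p ∂ν) ^ (1 / p) := by
  have hp0 : 0 < p := by positivity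
  have := hμ₁.1
  have := hμ₂.1
  have := hν.1
  have := fun i => (hm i).1
  suffices H : ∀ e : ℝ≥0, 0 < e → We p (μ₁.conv μ₂) (glue ν m ι hι) ≤
      We p μ₁ ν + (∫⁻ y, We p μ₂ (m (ι y)) ^ p ∂ν) ^ (1 / p) + (e + e) by
    refine ENNReal.le_of_forall_pos_le_add fun e he _ => ?_
    have := H (e / 2) (by positivity)
    rwa [← ENNReal.coe_add, add_halves] at this
  intro e he
  have he' : (e : ℝ≥0∞) ≠ 0 := by exact_mod_cast he.ne'
  obtain ⟨γ, hγ, hγe⟩ := exists_coupling (We_lt_top hp hμ₁ hν).ne he'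
  choose Γ hΓ hΓe using fun i => exists_coupling (We_lt_top hp hμ₂ (hm i)).ne he'
  have := hγ.isProb
  have := fun i => (hΓ i).isProb
  have hι2 : Measurable (fun q : Ed d × Ed d => ι q.2) := hι.comp measurable_snd
  let K := cker Γ (fun q : Ed d × Ed d => ι q.2) hι2
  let F : (Ed d × Ed d) × (Ed d × Ed d) → Ed d × Ed d := fun z => (z.1.1 + z.2.1, z.1.2 + z.2.2)
  have hF : Measurable F := by fun_prop
  have hwm : Measurable (fun y => We p μ₂ (m (ι y))) :=
    (measurable_from_nat (f := fun i => We p μ₂ (m i))).comp hι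
  have hc : IsCoupling ((γ.compProd K).map F) (μ₁.conv μ₂) (glue ν m ι hι) := by
    constructor
    · rw [Measure.map_map measurable_fst hF]
      refine Measure.ext_of_lintegral _ fun g hg => ?_
      rw [lintegral_map hg (by fun_prop), Measure.lintegral_compProd (by fun_prop),
        Measure.lintegral_conv hg, ← hγ.1, lintegral_map (by fun_prop) measurable_fst]
      refine lintegral_congr fun a => ?_
      rw [cker_apply, ← (hΓ (ι a.2)).1, lintegral_map (by fun_prop) measurable_fst]
      rfl
    · rw [Measure.map_map measurable_snd hF]
      refine Measure.ext_of_lintegral _ fun g hg => ?_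
      have hgm : Measurable (fun q : Ed d × Ed d => g (q.1 + q.2)) := by fun_prop
      have hL := hgm.lintegral_kernel_prod_right' (κ := cker m ι hι)
      rw [lintegral_map hg (by fun_prop), Measure.lintegral_compProd (by fun_prop), glue,
        lintegral_map hg (by fun_prop), Measure.lintegral_compProd (by fun_prop), ← hγ.2,
        lintegral_map hL measurable_snd]
      refine lintegral_congr fun a => ?_
      rw [cker_apply, cker_apply, ← (hΓ (ι a.2)).2, lintegral_map (by fun_prop) measurable_snd]
      rfl
  refine (We_le hc).trans ?_
  rw [lintegral_map (by fun_prop) hF]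
  refine le_trans (b := (∫⁻ z : (Ed d × Ed d) × (Ed d × Ed d),
    ((fun z : (Ed d × Ed d) × (Ed d × Ed d) => (‖z.1.2 - z.1.1‖₊ : ℝ≥0∞)) +
    (fun z : (Ed d × Ed d) × (Ed d × Ed d) => (‖z.2.2 - z.2.1‖₊ : ℝ≥0∞))) z ^ p
      ∂(γ.compProd K)) ^ (1 / p)) ?_ ?_
  · gcongr with z
    rw [Pi.add_apply]
    have := nnnorm_add_le (z.1.2 - z.1.1) (z.2.2 - z.2.1)
    rw [show z.1.2 - z.1.1 + (z.2.2 - z.2.1) = (F z).2 - (F z).1 by simp only [F]; abel] at this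
    exact_mod_cast this
  · refine (ENNReal.lintegral_Lp_add_le (by fun_prop) (by fun_prop) hp.le).trans ?_
    rw [Measure.lintegral_compProd (by fun_prop), Measure.lintegral_compProd (by fun_prop)]
    simp only [lintegral_const, measure_univ, mul_one]
    have h2 : (∫⁻ a : Ed d × Ed d, ∫⁻ b : Ed d × Ed d, (‖b.2 - b.1‖₊ : ℝ≥0∞) ^ p ∂(K a) ∂γ) ^ (1 / p)
        ≤ (∫⁻ y, We p μ₂ (m (ι y)) ^ p ∂ν) ^ (1 / p) + e := by
      have h3 : ∀ a : Ed d × Ed d, ∫⁻ b : Ed d × Ed d, (‖b.2 - b.1‖₊ : ℝ≥0∞) ^ p ∂(K a) ≤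
          ((fun y : Ed d => We p μ₂ (m (ι y))) + (fun _ : Ed d => (e : ℝ≥0∞))) a.2 ^ p := by
        intro a
        have := ENNReal.rpow_le_rpow (hΓe (ι a.2)) hp0.le
        rw [← ENNReal.rpow_mul, one_div_mul_cancel hp0.ne', ENNReal.rpow_one] at this
        exact this
      calc _ ≤ (∫⁻ a : Ed d × Ed d,
            ((fun y : Ed d => We p μ₂ (m (ι y))) + (fun _ : Ed d => (e : ℝ≥0∞))) a.2 ^ p ∂γ) ^ (1 / p) := by
            gcongr with a
            exact h3 a
        _ = (∫⁻ y, ((fun y : Ed d => We p μ₂ (m (ι y))) + (fun _ : Ed d => (e : ℝ≥0∞))) y ^ p ∂ν) ^ (1 / p) := by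
            rw [← hγ.2, lintegral_map _ measurable_snd]
            exact (hwm.add measurable_const).pow_const p
        _ ≤ _ := by
            refine (ENNReal.lintegral_Lp_add_le hwm.aemeasurable (by fun_prop) hp.le).trans ?_
            simp only [lintegral_const, measure_univ, mul_one]
            rw [← ENNReal.rpow_mul, mul_one_div_cancel hp0.ne', ENNReal.rpow_one]
    calc _ ≤ (We p μ₁ ν + e) + ((∫⁻ y, We p μ₂ (m (ι y)) ^ p ∂ν) ^ (1 / p) + e) :=
          add_le_add hγe h2
      _ = _ := by ring

/-! ### The one-step operator -/

structure BUC {d : ℕ} (M : ℝ) (g : Ed d → ℝ) : Prop where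
  bd : ∀ x, |g x| ≤ M
  uc : UniformContinuous g

lemma BUC.integrable {d : ℕ} {M : ℝ} {g : Ed d → ℝ} (hg : BUC M g) (x : Ed d) (ν : Measure (Ed d))
    [IsProbabilityMeasure ν] : Integrable (fun y => g (x + y)) ν := by
  have : Continuous (fun y => g (x + y)) := hg.uc.continuous.comp (by fun_prop)
  exact Integrable.of_bound this.aestronglyMeasurable M (ae_of_all _ fun y => hg.bd _)

lemma BUC.integral_le {d : ℕ} {M : ℝ} {g : Ed d → ℝ} (hg : BUC M g) (x : Ed d) (ν : Measure (Ed d))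
    [IsProbabilityMeasure ν] : |∫ y, g (x + y) ∂ν| ≤ M := by
  have := norm_integral_le_of_norm_le_const (μ := ν) (f := fun y => g (x + y)) (C := M)
    (ae_of_all _ fun y => hg.bd _)
  simpa using this

def Sset {d : ℕ} (p : ℝ) (φ : ℝ≥0 → ℝ≥0∞) (μt : Measure (Ed d)) (t : ℝ)
    (f : Ed d → ℝ) (x : Ed d) : Set ℝ :=
  { r : ℝ | ∃ ν : Measure (Ed d), MemPp p ν ∧ ∃ c : ℝ, 0 ≤ c ∧
    phit φ t (Wp p μt ν).toNNReal ≤ ENNReal.ofReal c ∧ r = (∫ y, f (x + y) ∂ν) - c }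

lemma Sset_bdd {d : ℕ} {p : ℝ} {φ : ℝ≥0 → ℝ≥0∞} {μt : Measure (Ed d)} {t : ℝ} {M : ℝ}
    {g : Ed d → ℝ} (hg : BUC M g) (x : Ed d) : M ∈ upperBounds (Sset p φ μt t g x) := by
  rintro r ⟨ν, hν, c, hc, -, rfl⟩
  have := hν.1
  have := (abs_le.1 (hg.integral_le x ν)).2
  linarith

lemma mem_Sset {d : ℕ} {p : ℝ} (hp : 1 < p) {φ : ℝ≥0 → ℝ≥0∞} (hφ : IsPenalty p φ)
    {μt : Measure (Ed d)} (hμ : MemPp p μt) (t : ℝ) (g : Ed d → ℝ) (x : Ed d) :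
    (∫ y, g (x + y) ∂μt) ∈ Sset p φ μt t g x := by
  refine ⟨μt, hμ, 0, le_rfl, ?_, by simp⟩
  have : Wp p μt μt = 0 := by
    change (We p μt μt).toReal = 0
    rw [We_self hp]; rfl
  rw [this, Real.toNNReal_zero, phit_zero hφ]
  exact bot_le

lemma le_Sop {d : ℕ} {p : ℝ} (hp : 1 < p) {φ : ℝ≥0 → ℝ≥0∞} (hφ : IsPenalty p φ)
    {μt : Measure (Ed d)} (hμ : MemPp p μt) (t : ℝ) {M : ℝ} {g : Ed d → ℝ} (hg : BUC M g)
    (x : Ed d) : (∫ y, g (x + y) ∂μt) ≤ Sop p φ μt t g x :=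
  le_csSup ⟨M, Sset_bdd hg x⟩ (mem_Sset hp hφ hμ t g x)

lemma Sop_le_add {d : ℕ} {p : ℝ} (hp : 1 < p) {φ : ℝ≥0 → ℝ≥0∞} (hφ : IsPenalty p φ)
    {μt : Measure (Ed d)} (hμ : MemPp p μt) (t : ℝ) {M M' : ℝ} {g h : Ed d → ℝ} (hg : BUC M g)
    (hh : BUC M' h) (x x' : Ed d) (e : ℝ) (H : ∀ y, g (x + y) ≤ h (x' + y) + e) :
    Sop p φ μt t g x ≤ Sop p φ μt t h x' + e := by
  refine csSup_le ⟨_, mem_Sset hp hφ hμ t g x⟩ ?_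
  rintro r ⟨ν, hν, c, hc, hc2, rfl⟩
  have := hν.1
  have h1 : (∫ y, h (x' + y) ∂ν) - c ≤ Sop p φ μt t h x' :=
    le_csSup ⟨M', Sset_bdd hh x'⟩ ⟨ν, hν, c, hc, hc2, rfl⟩
  have h2 : ∫ y, g (x + y) ∂ν ≤ ∫ y, (h (x' + y) + e) ∂ν :=
    integral_mono (hg.integrable x ν) ((hh.integrable x' ν).add (integrable_const e)) H
  rw [integral_add (hh.integrable x' ν) (integrable_const e)] at h2
  simp at h2
  linarith

lemma Sop_BUC {d : ℕ} {p : ℝ} (hp : 1 < p) {φ : ℝ≥0 → ℝ≥0∞} (hφ : IsPenalty p φ)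
    {μt : Measure (Ed d)} (hμ : MemPp p μt) (t : ℝ) {M : ℝ} {g : Ed d → ℝ} (hg : BUC M g) :
    BUC M (Sop p φ μt t g) := by
  have := hμ.1
  refine ⟨fun x => abs_le.2 ⟨?_, ?_⟩, ?_⟩
  · exact (abs_le.1 (hg.integral_le x μt)).1.trans (le_Sop hp hφ hμ t hg x)
  · exact csSup_le ⟨_, mem_Sset hp hφ hμ t g x⟩ (Sset_bdd hg x)
  · rw [Metric.uniformContinuous_iff]
    intro e he
    obtain ⟨δ, hδ, H⟩ := Metric.uniformContinuous_iff.1 hg.uc (e / 2) (by positivity)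
    refine ⟨δ, hδ, fun {a b} hab => ?_⟩
    have H' : ∀ a b : Ed d, dist a b < δ → Sop p φ μt t g a ≤ Sop p φ μt t g b + e / 2 := by
      intro a b hab
      refine Sop_le_add hp hφ hμ t hg hg a b _ fun y => ?_
      have := H (a := a + y) (b := b + y) (by simpa using hab)
      rw [Real.dist_eq] at this
      linarith [(abs_lt.1 this).2]
    rw [Real.dist_eq, abs_lt]
    have h1 := H' a b hab
    have h2 := H' b a (by rwa [dist_comm])
    constructor <;> linarith

lemma exists_index (d : ℕ) {δ : ℝ} (hδ : 0 < δ) : ∃ (e : ℕ → Ed d) (ι : Ed d → ℕ), Measurable ι ∧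
    ∀ y, dist y (e (ι y)) < δ := by
  classical
  let e := TopologicalSpace.denseSeq (Ed d)
  have hp : ∀ y : Ed d, ∃ N, dist y (e N) < δ := fun y =>
    (TopologicalSpace.denseRange_denseSeq (Ed d)).exists_dist_lt y hδ
  refine ⟨e, fun y => Nat.find (hp y), measurable_find hp fun k => ?_, fun y => Nat.find_spec (hp y)⟩
  exact measurableSet_lt (by fun_prop) measurable_const

lemma Sop_comp_le {d : ℕ} {p : ℝ} (hp : 1 < p) {φ : ℝ≥0 → ℝ≥0∞} (hφ : IsPenalty p φ)
    {μ₁ μ₂ : Measure (Ed d)} (hμ₁ : MemPp p μ₁) (hμ₂ : MemPp p μ₂) (hμ : MemPp p (μ₁.conv μ₂))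
    {s t : ℝ} (hs : 0 ≤ s) (ht : 0 ≤ t) {M : ℝ} {g : Ed d → ℝ} (hg : BUC M g) (x : Ed d) :
    Sop p φ μ₁ s (Sop p φ μ₂ t g) x ≤ Sop p φ (μ₁.conv μ₂) (s + t) g x := by
  have hp0 : 0 < p := by positivity
  set h := Sop p φ μ₂ t g with hdef
  have hh : BUC M h := Sop_BUC hp hφ hμ₂ t hg
  refine csSup_le ⟨_, mem_Sset hp hφ hμ₁ s h x⟩ ?_
  rintro r ⟨ν, hν, c₁, hc₁, hc₁', rfl⟩
  refine le_of_forall_pos_le_add fun ε' hε' => ?_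
  obtain ⟨ε, hε, rfl⟩ : ∃ ε : ℝ, 0 < ε ∧ 3 * ε = ε' := ⟨ε' / 3, by positivity, by ring⟩
  obtain ⟨δ₁, hδ₁, H₁⟩ := Metric.uniformContinuous_iff.1 hg.uc ε hε
  obtain ⟨δ₂, hδ₂, H₂⟩ := Metric.uniformContinuous_iff.1 hh.uc ε hε
  obtain ⟨e, ι, hι, hd⟩ := exists_index d (lt_min hδ₁ hδ₂)
  have hex : ∀ i : ℕ, ∃ m : Measure (Ed d), ∃ c : ℝ, MemPp p m ∧ 0 ≤ c ∧
      phit φ t (Wp p μ₂ m).toNNReal ≤ ENNReal.ofReal c ∧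
      h (x + e i) - ε < (∫ z, g (x + e i + z) ∂m) - c := by
    intro i
    obtain ⟨r, ⟨m, hm, c, hc, hc', rfl⟩, hr⟩ := exists_lt_of_lt_csSup
      (s := Sset p φ μ₂ t g (x + e i)) ⟨_, mem_Sset hp hφ hμ₂ t g (x + e i)⟩
      (b := h (x + e i) - ε) (by change _ < h (x + e i); linarith)
    exact ⟨m, c, hm, hc, hc', hr⟩
  choose m c hm hc0 hcp hcl using hex
  have := hν.1
  have := hμ₁.1
  have := hμ₂.1
  have := fun i => (hm i).1
  have hcC : ∀ i, c i ≤ 2 * M + ε := by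
    intro i
    have h1 := (abs_le.1 (hg.integral_le (x + e i) (m i))).2
    have h2 := (abs_le.1 (hh.bd (x + e i))).1
    linarith [hcl i]
  have hcm : Measurable (fun y => c (ι y)) := measurable_from_nat.comp hι
  have hci : Integrable (fun y => c (ι y)) ν := by
    refine Integrable.of_bound hcm.aestronglyMeasurable (2 * M + ε) (ae_of_all _ fun y => ?_)
    rw [Real.norm_of_nonneg (hc0 _)]; exact hcC _
  obtain ⟨B, hB, hBc⟩ := phit_jensen hp hφ t ν (fun y => (Wp p μ₂ (m (ι y))).toNNReal)
    ((measurable_from_nat (f := fun i => (Wp p μ₂ (m i)).toNNReal)).comp hι)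
    (fun y => c (ι y)) hcm (fun y => hc0 _) (2 * M + ε) (fun y => hcC _) (fun y => hcp _)
  have hWe : ∀ a b : Measure (Ed d), We p a b ≠ ∞ → ((Wp p a b).toNNReal : ℝ≥0∞) = We p a b := by
    intro a b hab
    change ENNReal.ofReal (We p a b).toReal = _
    rw [ENNReal.ofReal_toReal hab]
  have hB' : (∫⁻ y, We p μ₂ (m (ι y)) ^ p ∂ν) ^ (1 / p) = B := by
    rw [← hB]
    congr 1
    refine lintegral_congr fun y => ?_
    rw [hWe _ _ (We_lt_top hp hμ₂ (hm _)).ne]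
  have hglue := We_glue hp hμ₁ hμ₂ hν m hm ι hι
  rw [hB', ← hWe μ₁ ν (We_lt_top hp hμ₁ hν).ne, ← ENNReal.coe_add] at hglue
  have hfin : We p (μ₁.conv μ₂) (glue ν m ι hι) ≠ ∞ := ne_top_of_le_ne_top ENNReal.coe_ne_top hglue
  have hgp : IsProbabilityMeasure (glue ν m ι hι) := by
    unfold glue
    exact Measure.isProbabilityMeasure_map (by fun_prop)
  have hgm : MemPp p (glue ν m ι hι) := memPp_of_We hp hμ hgp hfin
  rw [← hWe _ _ hfin, ENNReal.coe_le_coe] at hglue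
  have hpen : phit φ (s + t) (Wp p (μ₁.conv μ₂) (glue ν m ι hι)).toNNReal ≤
      ENNReal.ofReal (c₁ + ∫ y, c (ι y) ∂ν) := by
    rw [ENNReal.ofReal_add hc₁ (integral_nonneg fun y => hc0 _)]
    exact (phit_mono hφ _ hglue).trans ((phit_add hφ hs ht _ _).trans (add_le_add hc₁' hBc))
  have hval : (∫ y, g (x + y) ∂(glue ν m ι hι)) - (c₁ + ∫ y, c (ι y) ∂ν) ≤
      Sop p φ (μ₁.conv μ₂) (s + t) g x :=
    le_csSup ⟨M, Sset_bdd hg x⟩ ⟨_, hgm, _,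
      add_nonneg hc₁ (integral_nonneg fun y => hc0 _), hpen, rfl⟩
  have hgc : Continuous (fun q : Ed d × Ed d => g (x + (q.1 + q.2))) :=
    hg.uc.continuous.comp (by fun_prop)
  have hgi : Integrable (fun q : Ed d × Ed d => g (x + (q.1 + q.2))) (ν.compProd (cker m ι hι)) :=
    Integrable.of_bound hgc.aestronglyMeasurable M (ae_of_all _ fun y => hg.bd _)
  have hgl : ∫ y, g (x + y) ∂(glue ν m ι hι) = ∫ y, ∫ z, g (x + (y + z)) ∂(m (ι y)) ∂ν := by
    unfold glue
    have hgx : Continuous (fun y => g (x + y)) := hg.uc.continuous.comp (by fun_prop)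
    rw [integral_map (by fun_prop) hgx.aestronglyMeasurable,
      Measure.integral_compProd hgi]
    rfl
  have hpt : ∀ y, h (x + y) ≤ (∫ z, g (x + (y + z)) ∂(m (ι y))) - c (ι y) + 3 * ε := by
    intro y
    have hd1 := (hd y).trans_le (min_le_left _ _)
    have hd2 := (hd y).trans_le (min_le_right _ _)
    have h1 := H₂ (a := x + y) (b := x + e (ι y)) (by simpa using hd2)
    rw [Real.dist_eq] at h1
    have h2 : ∫ z, g (x + e (ι y) + z) ∂(m (ι y)) ≤ ∫ z, (g (x + y + z) + ε) ∂(m (ι y)) := by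
      refine integral_mono (hg.integrable _ _) ((hg.integrable _ _).add (integrable_const ε)) ?_
      intro z
      have h3 := H₁ (a := x + y + z) (b := x + e (ι y) + z) (by simpa using hd1)
      rw [Real.dist_eq] at h3
      dsimp only
      linarith [(abs_lt.1 h3).1]
    rw [integral_add (hg.integrable _ _) (integrable_const ε)] at h2
    simp only [integral_const, probReal_univ, one_smul, add_assoc x] at h2
    have h4 := hcl (ι y)
    simp only [add_assoc x] at h4
    linarith [(abs_lt.1 h1).2]
  have hgi' : Integrable (fun y => ∫ z, g (x + (y + z)) ∂(m (ι y))) ν := by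
    have := MeasureTheory.Integrable.integral_compProd hgi
    exact this
  have hint := integral_mono (hh.integrable x ν)
    ((hgi'.sub hci).add (integrable_const (3 * ε))) hpt
  rw [integral_add' (hgi'.sub hci) (integrable_const (3 * ε)), integral_sub' hgi' hci] at hint
  simp only [integral_const, probReal_univ, one_smul] at hint
  rw [hgl] at hval
  linarith

lemma C0_BUC {d : ℕ} (f : C₀(Ed d, ℝ)) : ∃ M, BUC M (⇑f) := by
  refine ⟨‖f.toBCF‖, fun x => f.toBCF.norm_coe_le_norm x, ?_⟩
  exact ZeroAtInftyContinuousMap.uniformContinuous f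

lemma iter_bounds {d : ℕ} {p : ℝ} (hp : 1 < p) {φ : ℝ≥0 → ℝ≥0∞} (hφ : IsPenalty p φ)
    {μ : ℝ → Measure (Ed d)} (hμ : IsConvSemigroup p μ) {M : ℝ} {f : Ed d → ℝ} (hf : BUC M f)
    {h r : ℝ} (hh : 0 ≤ h) (hr : 0 ≤ r) (k : ℕ) :
    BUC M ((fun g => Sop p φ (μ h) h g)^[k] (Sop p φ (μ r) r f)) ∧ ∀ x,
    (∫ y, f (x + y) ∂(μ (r + k * h))) ≤ (fun g => Sop p φ (μ h) h g)^[k] (Sop p φ (μ r) r f) x ∧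
      (fun g => Sop p φ (μ h) h g)^[k] (Sop p φ (μ r) r f) x ≤
        Sop p φ (μ (r + k * h)) (r + k * h) f x := by
  induction k with
  | zero =>
    simp only [Function.iterate_zero, id, Nat.cast_zero, zero_mul, add_zero]
    exact ⟨Sop_BUC hp hφ (hμ.2.2 r hr) r hf, fun x => ⟨le_Sop hp hφ (hμ.2.2 r hr) r hf x, le_rfl⟩⟩
  | succ k ih =>
    obtain ⟨ih1, ih2⟩ := ih
    rw [Function.iterate_succ_apply']
    set G := (fun g => Sop p φ (μ h) h g)^[k] (Sop p φ (μ r) r f) with hG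
    have hu : 0 ≤ r + k * h := by positivity
    have hcast : r + ((k + 1 : ℕ) : ℝ) * h = h + (r + k * h) := by push_cast; ring
    rw [hcast]
    have hconv := hμ.2.1 h (r + k * h) hh hu
    have hm := hμ.2.2 (h + (r + k * h)) (by positivity)
    have hmh := hμ.2.2 h hh
    have hmu := hμ.2.2 _ hu
    have := hmh.1
    have := hmu.1
    refine ⟨Sop_BUC hp hφ hmh h ih1, fun x => ⟨?_, ?_⟩⟩
    · refine le_trans ?_ (le_Sop hp hφ hmh h ih1 x)
      have := hm.1
      have hi := hf.integrable x (μ (h + (r + k * h)))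
      rw [hconv] at hi ⊢
      rw [integral_conv hi]
      refine integral_mono ?_ (ih1.integrable x _) fun y => ?_
      · have hgc : Continuous (fun q : Ed d × Ed d => f (x + (q.1 + q.2))) :=
          hf.uc.continuous.comp (by fun_prop)
        have hgi : Integrable (fun q : Ed d × Ed d => f (x + (q.1 + q.2)))
            ((μ h).prod (μ (r + k * h))) :=
          Integrable.of_bound hgc.aestronglyMeasurable M (ae_of_all _ fun y => hf.bd _)
        exact hgi.integral_prod_left
      · have := (ih2 (x + y)).1
        simpa only [add_assoc x] using this
    · have hS := Sop_BUC hp hφ hmu (r + k * h) hf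
      have h1 := Sop_le_add hp hφ hmh h ih1 hS x x 0
        (fun y => by rw [add_zero]; exact (ih2 (x + y)).2)
      rw [add_zero] at h1
      refine h1.trans ?_
      rw [hconv] at hm ⊢
      exact Sop_comp_le hp hφ hmh hmu hm hh hu hf x

/-- `S^μ(t)f ≤ 𝒮ⁿ(t)f ≤ S(t)f`. -/
theorem stmt_11 (d : ℕ) (hd : 1 ≤ d) (p : ℝ) (hp : 1 < p)
    (φ : ℝ≥0 → ℝ≥0∞) (hφ : IsPenalty p φ)
    (μ : ℝ → Measure (Ed d)) (hμ : IsConvSemigroup p μ)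
    (f : C₀(Ed d, ℝ)) (t : ℝ) (ht : 0 ≤ t) (n : ℕ) (x : Ed d) :
    (∫ y, f (x + y) ∂(μ t)) ≤ SiterN p φ μ n t (⇑f) x ∧
      SiterN p φ μ n t (⇑f) x ≤ Sop p φ (μ t) t (⇑f) x := by
  obtain ⟨M, hM⟩ := C0_BUC f
  have h2 : (0:ℝ) < 2 ^ n := by positivity
  have hr : 0 ≤ t - ⌊(2:ℝ)^n * t⌋₊ * ((2:ℝ)^n)⁻¹ := by
    have := Nat.floor_le (a := (2:ℝ)^n * t) (by positivity)
    rw [sub_nonneg, ← div_eq_mul_inv, div_le_iff₀ h2, mul_comm t]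
    exact this
  have := (iter_bounds hp hφ hμ hM (h := ((2:ℝ)^n)⁻¹) (by positivity) hr ⌊(2:ℝ)^n * t⌋₊).2 x
  rw [sub_add_cancel] at this
  exact this
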